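/- Let r be a natural number, let p, q_1, …, q_r be real numbers, and let M be a real number such that p < M and q_j ≥ −M for all j ∈ {1,…,r}. Then the disjunction (p < 0 ∨ ∃ j ∈ {1,…,r}, q_j ≥ 0) holds if and only if there exist m_0, m_1, …, m_r ∈ {0,1} such that p − (1 − m_0)·M < 0, q_j + (1 − m_j)·M ≥ 0 for all j ∈ {1,…,r}, and ∑_{j=0}^{r} m_j ≥ 1. -/

import Mathlib

/-!
A selector `m_j = 1` turns its Big-M constraint into the disjunct itself, and `m_j = 0` turns it
into the bound assumed on `M`. So a true disjunct is encoded by the indicator vector of its index,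
and conversely a binary vector with sum at least `1` has a nonzero entry, whose constraint is a
true disjunct.
-/

/-- Correctness of the Big-M encoding. Given reals
`p, q₁, …, q_r` and `M` with `p < M` and `q_j ≥ −M` for all `j`, the
disjunction `p < 0 ∨ ∃ j, q_j ≥ 0` holds iff there exist binary
`m₀, m₁, …, m_r ∈ {0,1}` with `p − (1 − m₀)M < 0`,
`q_j + (1 − m_j)M ≥ 0` for all `j`, and `∑_{j=0}^r m_j ≥ 1`. -/
theorem bigM_encoding_correct
    (r : ℕ) (p : ℝ) (q : Fin r → ℝ) (M : ℝ)
    (hpM : p < M) (hqM : ∀ j : Fin r, -M ≤ q j) :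
    (p < 0 ∨ ∃ j : Fin r, 0 ≤ q j) ↔
      ∃ m : Fin (r + 1) → ℝ,
        (∀ j, m j = 0 ∨ m j = 1) ∧
        p - (1 - m 0) * M < 0 ∧
        (∀ j : Fin r, 0 ≤ q j + (1 - m j.succ) * M) ∧
        1 ≤ ∑ j, m j := by
  constructor
  · rintro (hp | ⟨k, hk⟩)
    · refine ⟨Pi.single 0 1, fun j => ?_, ?_, fun j => ?_, ?_⟩
      · by_cases h : j = 0 <;> simp [Pi.single_apply, h]
      · simpa using hp
      · have := hqM j
        simp [Pi.single_apply, Fin.succ_ne_zero]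
        linarith
      · simp
    · refine ⟨Pi.single k.succ 1, fun j => ?_, ?_, fun j => ?_, ?_⟩
      · by_cases h : j = k.succ <;> simp [Pi.single_apply, h]
      · simp [Pi.single_apply, (Fin.succ_ne_zero k).symm]
        linarith
      · have := hqM j
        by_cases h : j = k
        · subst h
          simpa using hk
        · simp [Pi.single_apply, h]
          linarith
      · simp
  · rintro ⟨m, hm, h0, hq, hsum⟩
    obtain ⟨i, -, hi⟩ : ∃ i ∈ Finset.univ, m i ≠ 0 :=
      Finset.exists_ne_zero_of_sum_ne_zero (by linarith)
    have hi1 : m i = 1 := (hm i).resolve_left hi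
    induction i using Fin.cases with
    | zero => exact Or.inl (by simpa [hi1] using h0)
    | succ j => exact Or.inr ⟨j, by simpa [hi1] using hq j⟩
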